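/- Let G be a connected finite simple graph on n ≥ 2 vertices and let α > 0 be a real number. Then S_α(G) ≤ (2n−2)^α + (n−1)·(n−2)^α, with equality if and only if G is the complete graph K_n. -/

import Mathlib

/-!
Write `x ↦ xᵀ Q(G) x = ½ ∑_{i ~ j} (x i + x j)²` for the signless Laplacian quadratic form. Dropping
the adjacency condition gives `0 ≤ xᵀ Q(G) x ≤ (n - 2) ∑ x i² + (∑ x i)²` (`quad_nonneg`,
`quad_le`), whose right-hand side is the quadratic form of the complete graph. Cauchy–Schwarz then
bounds every eigenvalue by `2n - 2`, and at most one eigenvalue exceeds `n - 2`, since the span of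
two orthogonal eigenvectors contains a nonzero vector with coordinate sum zero
(`eigs_le_of_ne`). Hence the eigenvalues are bounded termwise by the spectrum
`2n - 2, n - 2, …, n - 2` of `K_n`, and so are their `α`-th powers.

Equality of the power sums holds iff all termwise bounds are attained, hence iff the sums of the
eigenvalues themselves agree. The latter sum is the trace, i.e. the sum of the degrees, and this
equals `n (n - 1)` iff `G` is complete. In particular the spectrum of `K_n` need not be computed.
-/

open Matrix Finset

noncomputable section

namespace SLP

variable {V : Type*} [Fintype V] [DecidableEq V]

/-- The signless Laplacian matrix `Q(G) = D(G) + A(G)` of a finite simple graph. -/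
def Q (G : SimpleGraph V) : Matrix V V ℝ :=
  letI : DecidableRel G.Adj := Classical.decRel _
  G.degMatrix ℝ + G.adjMatrix ℝ

lemma Q_isHermitian (G : SimpleGraph V) : (Q G).IsHermitian := by
  letI : DecidableRel G.Adj := Classical.decRel _
  have h : Q G = G.degMatrix ℝ + G.adjMatrix ℝ := rfl
  rw [h, Matrix.IsHermitian]
  ext i j
  simp [Matrix.conjTranspose_apply, SimpleGraph.degMatrix, Matrix.diagonal,
    SimpleGraph.adjMatrix_apply, SimpleGraph.adj_comm]
  rcases eq_or_ne i j with rfl | hij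
  · simp
  · simp [hij, Ne.symm hij]

/-- The (unordered) signless Laplacian eigenvalues of `G`, listed with multiplicity
(indexed by the vertices). -/
def eigs (G : SimpleGraph V) : V → ℝ := (Q_isHermitian G).eigenvalues

/-- `S α G`: the sum of the α-th (real) powers of the nonzero signless Laplacian
eigenvalues of `G`. -/
def S (α : ℝ) (G : SimpleGraph V) : ℝ :=
  ∑ v ∈ Finset.univ.filter (fun v => eigs G v ≠ 0), eigs G v ^ α

/-! ### The quadratic form -/

/-- The entries of `Q G`, with the degree written as a sum of adjacency indicators. -/
lemma Q_apply (G : SimpleGraph V) [DecidableRel G.Adj] (i j : V) :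
    Q G i j = (if i = j then ∑ k, (if G.Adj i k then (1 : ℝ) else 0) else 0)
      + (if G.Adj i j then 1 else 0) := by
  have h : ((G.degree i : ℕ) : ℝ) = ∑ k, (if G.Adj i k then (1 : ℝ) else 0) := by
    rw [← G.card_neighborFinset_eq_degree, G.neighborFinset_eq_filter]
    simp
  rw [← h]
  unfold Q
  simp only [Matrix.add_apply, SimpleGraph.degMatrix, Matrix.diagonal_apply,
    SimpleGraph.adjMatrix_apply]
  congr
  exact funext fun _ => Subsingleton.elim _ _

/-- The sum-of-squares form of `Q G`; each edge is counted in both directions, hence the factor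
`2`. -/
lemma two_mul_quad (G : SimpleGraph V) [DecidableRel G.Adj] (x : V → ℝ) :
    2 * (x ⬝ᵥ Q G *ᵥ x) = ∑ i, ∑ j, if G.Adj i j then (x i + x j) ^ 2 else 0 := by
  have h1 : x ⬝ᵥ Q G *ᵥ x = ∑ i, ∑ j, if G.Adj i j then x i ^ 2 + x i * x j else 0 := by
    simp only [dotProduct, mulVec, Q_apply]
    refine Finset.sum_congr rfl fun i _ => ?_
    simp only [add_mul, Finset.sum_add_distrib, ite_mul, zero_mul, Finset.sum_ite_eq,
      Finset.mem_univ, if_true, one_mul, mul_add, Finset.sum_mul, Finset.mul_sum]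
    rw [← Finset.sum_add_distrib]
    refine Finset.sum_congr rfl fun j _ => ?_
    split_ifs <;> ring
  have h2 : x ⬝ᵥ Q G *ᵥ x = ∑ i, ∑ j, if G.Adj i j then x j ^ 2 + x i * x j else 0 := by
    rw [h1, Finset.sum_comm]
    refine Finset.sum_congr rfl fun i _ => Finset.sum_congr rfl fun j _ => ?_
    simp only [G.adj_comm j i]
    split_ifs <;> ring
  rw [two_mul]
  nth_rw 1 [h1]
  rw [h2]
  simp only [← Finset.sum_add_distrib]
  refine Finset.sum_congr rfl fun i _ => Finset.sum_congr rfl fun j _ => ?_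
  split_ifs <;> ring

lemma quad_nonneg (G : SimpleGraph V) (x : V → ℝ) : 0 ≤ x ⬝ᵥ Q G *ᵥ x := by
  classical
  have h := two_mul_quad G x
  have : 0 ≤ ∑ i, ∑ j, if G.Adj i j then (x i + x j) ^ 2 else 0 :=
    Finset.sum_nonneg fun i _ => Finset.sum_nonneg fun j _ => by split_ifs <;> positivity
  linarith

/-- The quadratic form of `Q G` is dominated by that of the complete graph. -/
lemma quad_le (G : SimpleGraph V) (x : V → ℝ) :
    x ⬝ᵥ Q G *ᵥ x ≤ ((Fintype.card V : ℝ) - 2) * ∑ i, x i ^ 2 + (∑ i, x i) ^ 2 := by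
  classical
  have h := two_mul_quad G x
  have h1 : ∑ i, ∑ j, (if G.Adj i j then (x i + x j) ^ 2 else 0)
      ≤ ∑ i, ∑ j, ((x i + x j) ^ 2 - if i = j then 4 * x i ^ 2 else 0) := by
    refine Finset.sum_le_sum fun i _ => Finset.sum_le_sum fun j _ => ?_
    by_cases hij : i = j
    · subst hij
      simp only [SimpleGraph.irrefl, if_false, if_true]
      linarith
    · simp only [hij, if_false, sub_zero]
      split_ifs
      · exact le_rfl
      · positivity
  have h2 : ∑ i, ∑ j, ((x i + x j) ^ 2 - if i = j then 4 * x i ^ 2 else 0)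
      = 2 * (((Fintype.card V : ℝ) - 2) * ∑ i, x i ^ 2 + (∑ i, x i) ^ 2) := by
    simp only [add_sq, mul_assoc, Finset.sum_sub_distrib, Finset.sum_add_distrib,
      ← Finset.mul_sum, ← Finset.sum_mul, Finset.sum_ite_eq, Finset.mem_univ, if_true, Finset.sum_const,
      Finset.card_univ, nsmul_eq_mul]
    ring
  linarith

/-! ### Eigenvalue bounds -/

/-- The eigenvector of `Q G` belonging to `eigs G i`, as a plain function on the vertices. -/
def evec (G : SimpleGraph V) (i : V) : V → ℝ := (Q_isHermitian G).eigenvectorBasis i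

lemma mulVec_evec (G : SimpleGraph V) (i : V) : Q G *ᵥ evec G i = eigs G i • evec G i :=
  (Q_isHermitian G).mulVec_eigenvectorBasis i

lemma evec_dotProduct (G : SimpleGraph V) (i j : V) :
    evec G i ⬝ᵥ evec G j = if i = j then 1 else 0 := by
  have h := orthonormal_iff_ite.mp (Q_isHermitian G).eigenvectorBasis.orthonormal i j
  rw [← h, EuclideanSpace.inner_eq_star_dotProduct, dotProduct_comm]
  simp [evec]

lemma sum_evec_sq (G : SimpleGraph V) (i : V) : ∑ k, evec G i k ^ 2 = 1 := by
  have h := evec_dotProduct G i i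
  simpa [dotProduct, sq] using h

lemma quad_evec (G : SimpleGraph V) (i : V) : evec G i ⬝ᵥ Q G *ᵥ evec G i = eigs G i := by
  rw [mulVec_evec, dotProduct_smul, evec_dotProduct]
  simp

lemma eigs_nonneg (G : SimpleGraph V) (i : V) : 0 ≤ eigs G i :=
  quad_evec G i ▸ quad_nonneg G _

lemma eigs_le_add_sq (G : SimpleGraph V) (i : V) :
    eigs G i ≤ ((Fintype.card V : ℝ) - 2) + (∑ k, evec G i k) ^ 2 := by
  have h := quad_le G (evec G i)
  rwa [quad_evec, sum_evec_sq, mul_one] at h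

lemma eigs_le (G : SimpleGraph V) (i : V) : eigs G i ≤ 2 * (Fintype.card V : ℝ) - 2 := by
  have h := eigs_le_add_sq G i
  have h2 := sq_sum_le_card_mul_sum_sq (s := (Finset.univ : Finset V)) (f := evec G i)
  rw [sum_evec_sq, mul_one, Finset.card_univ] at h2
  linarith

/-- At most one eigenvalue exceeds `n - 2`. -/
lemma eigs_le_of_ne (G : SimpleGraph V) {i j : V} (hij : i ≠ j)
    (hle : eigs G i ≤ eigs G j) : eigs G i ≤ (Fintype.card V : ℝ) - 2 := by
  by_contra! hi
  set c : ℝ := (Fintype.card V : ℝ) - 2 with hc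
  set u := evec G i with hu
  set v := evec G j with hv
  set s := ∑ k, u k with hs
  set t := ∑ k, v k with ht
  -- The combination of the two eigenvectors whose coordinates sum to zero.
  have h := quad_le G (t • u - s • v)
  have huu : u ⬝ᵥ u = 1 := by simp [hu, evec_dotProduct]
  have hvv : v ⬝ᵥ v = 1 := by simp [hv, evec_dotProduct]
  have huv : u ⬝ᵥ v = 0 := by simp [hu, hv, evec_dotProduct, hij]
  have hvu : v ⬝ᵥ u = 0 := by rw [dotProduct_comm, huv]
  have hquad : (t • u - s • v) ⬝ᵥ Q G *ᵥ (t • u - s • v)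
      = t ^ 2 * eigs G i + s ^ 2 * eigs G j := by
    rw [mulVec_sub, mulVec_smul, mulVec_smul, mulVec_evec, mulVec_evec, ← hu, ← hv]
    simp only [sub_dotProduct, dotProduct_sub, smul_dotProduct, dotProduct_smul, huu, hvv, huv,
      hvu, smul_eq_mul]
    ring
  have hnorm : ∑ k, (t • u - s • v) k ^ 2 = t ^ 2 + s ^ 2 := by
    have : ∑ k, (t • u - s • v) k ^ 2 = (t • u - s • v) ⬝ᵥ (t • u - s • v) := by
      simp only [dotProduct, sq]
    rw [this]
    simp only [sub_dotProduct, dotProduct_sub, smul_dotProduct, dotProduct_smul, huu, hvv, huv,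
      hvu, smul_eq_mul]
    ring
  have hsum : ∑ k, (t • u - s • v) k = 0 := by
    simp only [Pi.sub_apply, Pi.smul_apply, smul_eq_mul, Finset.sum_sub_distrib,
      ← Finset.mul_sum, ← hs, ← ht]
    ring
  rw [hquad, hnorm, hsum, ← hc] at h
  have hi2 : eigs G i ≤ c + s ^ 2 := eigs_le_add_sq G i
  have hs0 : 0 < s ^ 2 := by linarith
  have h1 : 0 < s ^ 2 * (eigs G j - c) := mul_pos hs0 (by linarith)
  have h2 : 0 ≤ t ^ 2 * (eigs G i - c) := mul_nonneg (sq_nonneg t) (by linarith)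
  nlinarith

/-! ### The trace -/

lemma sum_eigs (G : SimpleGraph V) [DecidableRel G.Adj] :
    ∑ i, eigs G i = ∑ i, ∑ k, (if G.Adj i k then (1 : ℝ) else 0) := by
  have h := (Q_isHermitian G).trace_eq_sum_eigenvalues
  simp only [RCLike.ofReal_real_eq_id, id_eq] at h
  rw [show ∑ i, eigs G i = (Q G).trace from h.symm]
  simp [Matrix.trace, Q_apply]

/-- The eigenvalue sum detects completeness, as it counts the ordered adjacent pairs. -/
lemma sum_eigs_eq_iff (G : SimpleGraph V) :
    ∑ i, eigs G i = (Fintype.card V : ℝ) * ((Fintype.card V : ℝ) - 1) ↔ G = ⊤ := by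
  classical
  have hR : (Fintype.card V : ℝ) * ((Fintype.card V : ℝ) - 1)
      = ∑ i : V, ∑ k : V, (if i = k then (0 : ℝ) else 1) := by
    have : ∀ i k : V, (if i = k then (0 : ℝ) else 1) = 1 - if i = k then 1 else 0 := by
      intro i k; split_ifs <;> ring
    simp only [this, Finset.sum_sub_distrib, Finset.sum_const, Finset.card_univ, nsmul_eq_mul,
      Finset.sum_ite_eq, Finset.mem_univ, if_true]
    ring
  have hle : ∀ i k : V, (if G.Adj i k then (1 : ℝ) else 0) ≤ if i = k then 0 else 1 := by
    intro i k
    by_cases hik : i = k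
    · subst hik; simp
    · simp only [hik, if_false]; split_ifs <;> norm_num
  rw [sum_eigs, hR, Finset.sum_eq_sum_iff_of_le
    (fun i _ => Finset.sum_le_sum fun k _ => hle i k)]
  constructor
  · intro h
    ext i k
    have hi := (Finset.sum_eq_sum_iff_of_le (fun k _ => hle i k)).mp (h i (Finset.mem_univ i)) k
      (Finset.mem_univ k)
    rw [SimpleGraph.top_adj]
    split_ifs at hi <;> simp_all
  · rintro rfl i -
    refine Finset.sum_congr rfl fun k _ => ?_
    simp only [SimpleGraph.top_adj]
    split_ifs <;> simp_all

/-! ### Power sums -/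

lemma S_eq_sum {α : ℝ} (hα : 0 < α) (G : SimpleGraph V) : S α G = ∑ v, eigs G v ^ α := by
  unfold S
  refine Finset.sum_filter_of_ne fun v _ h h0 => h ?_
  rw [h0, Real.zero_rpow hα.ne']

lemma sum_ite_one (i₀ : V) (a b : ℝ) :
    ∑ i, (if i = i₀ then a else b) = a + ((Fintype.card V : ℝ) - 1) * b := by
  have : ∀ i, (if i = i₀ then a else b) = b + if i = i₀ then a - b else 0 := by
    intro i; split_ifs <;> ring
  simp only [this, Finset.sum_add_distrib, Finset.sum_ite_eq', Finset.mem_univ, if_true,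
    Finset.sum_const, Finset.card_univ, nsmul_eq_mul]
  ring

theorem S_alpha_le_complete_pos {n : ℕ} (hn : 2 ≤ n) (hcard : Fintype.card V = n)
    (G : SimpleGraph V) (hconn : G.Connected) (α : ℝ) (hα : 0 < α) :
    S α G ≤ (2 * (n : ℝ) - 2) ^ α + ((n : ℝ) - 1) * ((n : ℝ) - 2) ^ α ∧
    (S α G = (2 * (n : ℝ) - 2) ^ α + ((n : ℝ) - 1) * ((n : ℝ) - 2) ^ α ↔ G = ⊤) := by
  subst hcard
  set n : ℝ := (Fintype.card V : ℝ) with hn'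
  have hn2 : (2 : ℝ) ≤ n := by rw [hn']; exact_mod_cast hn
  have : Nonempty V := hconn.nonempty
  obtain ⟨i₀, hmax⟩ := Finite.exists_max (eigs G)
  -- The spectrum of the complete graph, with its largest eigenvalue placed at `i₀`.
  let b : V → ℝ := fun i => if i = i₀ then 2 * n - 2 else n - 2
  have hb : ∀ i, eigs G i ≤ b i := by
    intro i
    by_cases h : i = i₀
    · simp only [b, h, if_true]; exact eigs_le G i₀
    · simp only [b, h, if_false]; exact eigs_le_of_ne G h (hmax i)
  have hb0 : ∀ i, 0 ≤ b i := fun i => (eigs_nonneg G i).trans (hb i)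
  have hpow : ∀ i ∈ Finset.univ, eigs G i ^ α ≤ b i ^ α := fun i _ =>
    Real.rpow_le_rpow (eigs_nonneg G i) (hb i) hα.le
  have hsumb : ∑ i, b i = n * (n - 1) := by
    rw [sum_ite_one]; ring
  have hsumpow : ∑ i, b i ^ α = (2 * n - 2) ^ α + (n - 1) * (n - 2) ^ α := by
    rw [← sum_ite_one i₀]
    exact Finset.sum_congr rfl fun i _ => by simp only [b]; split_ifs <;> rfl
  rw [S_eq_sum hα, ← hsumpow]
  refine ⟨Finset.sum_le_sum hpow, ?_⟩
  rw [Finset.sum_eq_sum_iff_of_le hpow, ← sum_eigs_eq_iff, ← hn', ← hsumb,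
    Finset.sum_eq_sum_iff_of_le fun i _ => hb i]
  exact forall₂_congr fun i _ => Real.rpow_left_inj (eigs_nonneg G i) (hb0 i) hα.ne'

end SLP
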